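/- arXiv:2504.06679 — 7 statements merged into one kernel-verified Lean document; each statement's English description precedes it below -/
import Mathlib

section
/- Let n, p be positive integers. Then the supremum over ξ = (x,y,z) ∈ [0,π]³ of the squared Euclidean norm |X_{0,n,p}(ξ)|² equals 4·max{n², p²}/(π³(n² + p²)). Equivalently, the maximum over (y,z) ∈ [0,π]² of p²·sin²(ny)·cos²(pz) + n²·cos²(ny)·sin²(pz) equals max{n², p²}. -/
open Real Set

/-!
Write `s = sin² (n y)` and `t = sin² (p z)`. The planar expression is
`p² s (1 - t) + n² (1 - s) t`, and the weights `s (1 - t)` and `(1 - s) t` are nonnegative with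
sum `1 - (s t + (1 - s) (1 - t)) ≤ 1`, so it is at most `max {n², p²}` (`planar_le_max`).
The value `p²` is attained at `(π / (2 n), 0)` and `n²` at `(0, π / (2 p))`, both in the square
because `n, p ≥ 1` (`exists_planar_eq_max`). The squared norm of the vector field is the planar
expression times the positive constant `4 / (π³ (n² + p²))`.
-/

/-- The left side is a convex combination of `A`, `B` and `0`, the weight of `0` being
`sin² a sin² b + cos² a cos² b`. -/
lemma planar_le_max (A B a b : ℝ) (hA : 0 ≤ A) :
    A * Real.sin a ^ 2 * Real.cos b ^ 2 + B * Real.cos a ^ 2 * Real.sin b ^ 2 ≤ max B A := by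
  have hM : 0 ≤ max B A := hA.trans (le_max_right _ _)
  have h1 : A * (Real.sin a ^ 2 * Real.cos b ^ 2) ≤
      max B A * (Real.sin a ^ 2 * Real.cos b ^ 2) :=
    mul_le_mul_of_nonneg_right (le_max_right _ _) (by positivity)
  have h2 : B * (Real.cos a ^ 2 * Real.sin b ^ 2) ≤
      max B A * (Real.cos a ^ 2 * Real.sin b ^ 2) :=
    mul_le_mul_of_nonneg_right (le_max_left _ _) (by positivity)
  -- Expanding `(sin² a + cos² a) (sin² b + cos² b) = 1` gives these two products and two others.
  have h3 : Real.sin a ^ 2 * Real.cos b ^ 2 + Real.cos a ^ 2 * Real.sin b ^ 2 ≤ 1 := by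
    have h4 : (Real.sin a ^ 2 + Real.cos a ^ 2) * (Real.sin b ^ 2 + Real.cos b ^ 2) = 1 := by
      rw [Real.sin_sq_add_cos_sq, Real.sin_sq_add_cos_sq, one_mul]
    have h5 : 0 ≤ Real.sin a ^ 2 * Real.sin b ^ 2 := by positivity
    have h6 : 0 ≤ Real.cos a ^ 2 * Real.cos b ^ 2 := by positivity
    linarith
  have h7 := mul_le_mul_of_nonneg_left h3 hM
  linarith

lemma pi_div_two_mul_mem_Icc (n : ℕ) (hn : 0 < n) : π / (2 * n) ∈ Icc 0 π := by
  have h1 : (1 : ℝ) ≤ n := by exact_mod_cast hn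
  exact ⟨by positivity, div_le_self Real.pi_pos.le (by linarith)⟩

lemma exists_planar_eq_max (n p : ℕ) (hn : 0 < n) (hp : 0 < p) :
    ∃ y ∈ Icc 0 π, ∃ z ∈ Icc 0 π,
      (p : ℝ) ^ 2 * Real.sin (n * y) ^ 2 * Real.cos (p * z) ^ 2 +
        (n : ℝ) ^ 2 * Real.cos (n * y) ^ 2 * Real.sin (p * z) ^ 2 =
      max ((n : ℝ) ^ 2) ((p : ℝ) ^ 2) := by
  have h0 : (0 : ℝ) ∈ Icc 0 π := ⟨le_rfl, Real.pi_pos.le⟩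
  have harg (k : ℕ) (hk : 0 < k) : (k : ℝ) * (π / (2 * k)) = π / 2 := by
    have : (k : ℝ) ≠ 0 := by positivity
    field_simp
  rcases le_total ((n : ℝ) ^ 2) ((p : ℝ) ^ 2) with h | h
  · refine ⟨π / (2 * n), pi_div_two_mul_mem_Icc n hn, 0, h0, ?_⟩
    rw [max_eq_right h, harg n hn]
    simp
  · refine ⟨0, h0, π / (2 * p), pi_div_two_mul_mem_Icc p hp, ?_⟩
    rw [max_eq_left h, harg p hp]
    simp

/-- the squared L^∞ norm of the Stokes eigenfunction `X_{0,n,p}` over the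
cube `[0,π]³` equals `4·max{n²,p²}/(π³(n²+p²))`; equivalently, the maximum over `[0,π]²`
of `p²·sin²(ny)·cos²(pz) + n²·cos²(ny)·sin²(pz)` equals `max{n²,p²}`. -/
theorem stmt0 (n p : ℕ) (hn : 0 < n) (hp : 0 < p) :
    IsGreatest
      ((fun ξ : ℝ × ℝ × ℝ =>
          (2 / Real.sqrt (π ^ 3 * ((n : ℝ) ^ 2 + (p : ℝ) ^ 2)) * 0) ^ 2 +
          (2 / Real.sqrt (π ^ 3 * ((n : ℝ) ^ 2 + (p : ℝ) ^ 2)) *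
            ((p : ℝ) * Real.sin (n * ξ.2.1) * Real.cos (p * ξ.2.2))) ^ 2 +
          (2 / Real.sqrt (π ^ 3 * ((n : ℝ) ^ 2 + (p : ℝ) ^ 2)) *
            (-(n : ℝ) * Real.cos (n * ξ.2.1) * Real.sin (p * ξ.2.2))) ^ 2) ''
        (Icc 0 π ×ˢ Icc 0 π ×ˢ Icc 0 π))
      (4 * max ((n : ℝ) ^ 2) ((p : ℝ) ^ 2) / (π ^ 3 * ((n : ℝ) ^ 2 + (p : ℝ) ^ 2))) ∧
    IsGreatest
      ((fun q : ℝ × ℝ =>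
          (p : ℝ) ^ 2 * Real.sin (n * q.1) ^ 2 * Real.cos (p * q.2) ^ 2 +
          (n : ℝ) ^ 2 * Real.cos (n * q.1) ^ 2 * Real.sin (p * q.2) ^ 2) ''
        (Icc 0 π ×ˢ Icc 0 π))
      (max ((n : ℝ) ^ 2) ((p : ℝ) ^ 2)) := by
  have hD : 0 < π ^ 3 * ((n : ℝ) ^ 2 + (p : ℝ) ^ 2) := by positivity
  have hc : (2 / Real.sqrt (π ^ 3 * ((n : ℝ) ^ 2 + (p : ℝ) ^ 2))) ^ 2 =
      4 / (π ^ 3 * ((n : ℝ) ^ 2 + (p : ℝ) ^ 2)) := by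
    rw [div_pow, Real.sq_sqrt hD.le]
    norm_num
  have key (y z : ℝ) :
      (2 / Real.sqrt (π ^ 3 * ((n : ℝ) ^ 2 + (p : ℝ) ^ 2)) * 0) ^ 2 +
          (2 / Real.sqrt (π ^ 3 * ((n : ℝ) ^ 2 + (p : ℝ) ^ 2)) *
            ((p : ℝ) * Real.sin (n * y) * Real.cos (p * z))) ^ 2 +
          (2 / Real.sqrt (π ^ 3 * ((n : ℝ) ^ 2 + (p : ℝ) ^ 2)) *
            (-(n : ℝ) * Real.cos (n * y) * Real.sin (p * z))) ^ 2 =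
        4 / (π ^ 3 * ((n : ℝ) ^ 2 + (p : ℝ) ^ 2)) *
          ((p : ℝ) ^ 2 * Real.sin (n * y) ^ 2 * Real.cos (p * z) ^ 2 +
            (n : ℝ) ^ 2 * Real.cos (n * y) ^ 2 * Real.sin (p * z) ^ 2) := by
    rw [← hc]
    ring
  obtain ⟨y, hy, z, hz, hyz⟩ := exists_planar_eq_max n p hn hp
  refine ⟨⟨⟨(0, y, z), ⟨⟨le_rfl, Real.pi_pos.le⟩, hy, hz⟩, ?_⟩, ?_⟩,
    ⟨⟨(y, z), ⟨hy, hz⟩, hyz⟩, ?_⟩⟩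
  · refine (key y z).trans ?_
    rw [hyz, div_mul_eq_mul_div]
  · rintro _ ⟨⟨x, y', z'⟩, -, rfl⟩
    refine (key y' z').trans_le ?_
    rw [← div_mul_eq_mul_div]
    exact mul_le_mul_of_nonneg_left (planar_le_max _ _ _ _ (by positivity)) (by positivity)
  · rintro _ ⟨⟨y', z'⟩, -, rfl⟩
    exact planar_le_max _ _ _ _ (by positivity)
end

section
/- Let m, p be positive integers. Then the supremum over ξ = (x,y,z) ∈ [0,π]³ of the squared Euclidean norm |Y_{m,0,p}(ξ)|² equals 4·max{m², p²}/(π³(m² + p²)). -/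
/-! With `D = π³(m² + p²)`, the squared norm at `(x, y, z)` is
`(4 / D) (p² sin²(mx) cos²(pz) + m² cos²(mx) sin²(pz))`. The weights `sin²(mx) cos²(pz)` and
`cos²(mx) sin²(pz)` are nonnegative, and their sum is at most
`(sin²(mx) + cos²(mx)) (sin²(pz) + cos²(pz)) = 1`, which gives the upper bound
`4 max(m², p²) / D`. It is attained at `(0, 0, π/(2p))` when `p ≤ m` and at `(π/(2m), 0, 0)`
when `m ≤ p`. -/

open Real Set

lemma sq_norm_formula {D : ℝ} (hD : 0 ≤ D) (a b : ℝ) :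
    (2 / Real.sqrt D * a) ^ 2 + (2 / Real.sqrt D * 0) ^ 2 + (2 / Real.sqrt D * b) ^ 2 =
      4 * (a ^ 2 + b ^ 2) / D := by
  rw [mul_pow, mul_pow, mul_pow, div_pow, Real.sq_sqrt hD]
  ring

lemma trig_bound (m p u v : ℝ) :
    (-p * Real.sin u * Real.cos v) ^ 2 + (m * Real.cos u * Real.sin v) ^ 2 ≤
      max (m ^ 2) (p ^ 2) := by
  have hu := Real.sin_sq_add_cos_sq u
  have hv := Real.sin_sq_add_cos_sq v
  set M := max (m ^ 2) (p ^ 2)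
  have hM : 0 ≤ M := (sq_nonneg m).trans (le_max_left _ _)
  calc (-p * Real.sin u * Real.cos v) ^ 2 + (m * Real.cos u * Real.sin v) ^ 2
      = p ^ 2 * (Real.sin u * Real.cos v) ^ 2 + m ^ 2 * (Real.cos u * Real.sin v) ^ 2 := by ring
    _ ≤ M * (Real.sin u * Real.cos v) ^ 2 + M * (Real.cos u * Real.sin v) ^ 2 := by
        gcongr
        · exact le_max_right _ _
        · exact le_max_left _ _
    _ ≤ M * ((Real.sin u ^ 2 + Real.cos u ^ 2) * (Real.sin v ^ 2 + Real.cos v ^ 2)) := by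
        rw [← mul_add]
        refine mul_le_mul_of_nonneg_left ?_ hM
        linarith [sq_nonneg (Real.sin u * Real.sin v), sq_nonneg (Real.cos u * Real.cos v)]
    _ = M := by rw [hu, hv]; ring

/-- The quarter-period of `sin (n x)` lies in `[0, π]`. -/
lemma quarter_mem {n : ℕ} (hn : 0 < n) : π / (2 * n) ∈ Icc 0 π := by
  have h1 : (1 : ℝ) ≤ n := by exact_mod_cast hn
  refine ⟨by positivity, div_le_self Real.pi_pos.le (by linarith)⟩

lemma mul_quarter {n : ℕ} (hn : 0 < n) : (n : ℝ) * (π / (2 * n)) = π / 2 := by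
  have h1 : (n : ℝ) ≠ 0 := by exact_mod_cast hn.ne'
  field_simp

/-- the squared L^∞ norm of the Stokes eigenfunction `Y_{m,0,p}` over the
cube `[0,π]³` equals `4·max{m²,p²}/(π³(m²+p²))`. -/
theorem stmt1 (m p : ℕ) (hm : 0 < m) (hp : 0 < p) :
    IsGreatest
      ((fun ξ : ℝ × ℝ × ℝ =>
          (2 / Real.sqrt (π ^ 3 * ((m : ℝ) ^ 2 + (p : ℝ) ^ 2)) *
            (-(p : ℝ) * Real.sin (m * ξ.1) * Real.cos (p * ξ.2.2))) ^ 2 +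
          (2 / Real.sqrt (π ^ 3 * ((m : ℝ) ^ 2 + (p : ℝ) ^ 2)) * 0) ^ 2 +
          (2 / Real.sqrt (π ^ 3 * ((m : ℝ) ^ 2 + (p : ℝ) ^ 2)) *
            ((m : ℝ) * Real.cos (m * ξ.1) * Real.sin (p * ξ.2.2))) ^ 2) ''
        (Icc 0 π ×ˢ Icc 0 π ×ˢ Icc 0 π))
      (4 * max ((m : ℝ) ^ 2) ((p : ℝ) ^ 2) / (π ^ 3 * ((m : ℝ) ^ 2 + (p : ℝ) ^ 2))) := by
  have hD : 0 ≤ π ^ 3 * ((m : ℝ) ^ 2 + (p : ℝ) ^ 2) := by positivity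
  have h0 : (0 : ℝ) ∈ Icc 0 π := ⟨le_rfl, Real.pi_pos.le⟩
  simp only [sq_norm_formula hD]
  constructor
  · rcases le_total p m with h | h
    · have h' : (p : ℝ) ^ 2 ≤ (m : ℝ) ^ 2 := by gcongr
      refine ⟨(0, 0, π / (2 * p)), ⟨h0, h0, quarter_mem hp⟩, ?_⟩
      simp [mul_quarter hp, max_eq_left h']
    · have h' : (m : ℝ) ^ 2 ≤ (p : ℝ) ^ 2 := by gcongr
      refine ⟨(π / (2 * m), 0, 0), ⟨quarter_mem hm, h0, h0⟩, ?_⟩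
      simp [mul_quarter hm, max_eq_right h']
  · rintro _ ⟨ξ, -, rfl⟩
    have := trig_bound m p (m * ξ.1) (p * ξ.2.2)
    dsimp only
    gcongr
end

section
/- Let m, n, p be positive integers. Then the supremum over ξ = (x,y,z) ∈ [0,π]³ of the squared Euclidean norm |W_{m,n,p}(ξ)|² equals 8·max{(n²+p²)², m²n², m²p²}/(π³(n²+p²)(m²+n²+p²)). -/
open Real Set

/-!
The squared length is the common factor `8 / (π³ (m² + n² + p²) (n² + p²))` times
`A·s·b·c + B·(1 - s)·(1 - b)·c + C·(1 - s)·b·(1 - c)`, where `s = sin² (m x)`, `b = cos² (n y)`,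
`c = cos² (p z)` lie in `[0,1]`, and `A = (n² + p²)²`, `B = m² n²`, `C = m² p²`.
The weights `s b c`, `(1 - s)(1 - b) c` and `(1 - s) b (1 - c)` are nonnegative with sum at most
`1`, so the expression is at most `max A B C` (`weighted_le_max`).  Each of `A`, `B`, `C` is
attained at a point of the cube with one quarter-period coordinate, `π/(2m)`, `π/(2n)` or `π/(2p)`,
the other two being `0`.
-/

/-- The squared length of the field, with the square roots of the normalisation and the squared
sines of `y` and `z` and cosine of `x` eliminated. -/
lemma sq_norm_eq (m n p x y z : ℝ) (hm : 0 < m) (hn : 0 < n) (hp : 0 < p) :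
    (2 * √2 / √(π ^ 3 * (m ^ 2 + n ^ 2 + p ^ 2) * (n ^ 2 + p ^ 2)) *
        ((n ^ 2 + p ^ 2) * sin (m * x) * cos (n * y) * cos (p * z))) ^ 2 +
      (2 * √2 / √(π ^ 3 * (m ^ 2 + n ^ 2 + p ^ 2) * (n ^ 2 + p ^ 2)) *
        (-m * n * cos (m * x) * sin (n * y) * cos (p * z))) ^ 2 +
      (2 * √2 / √(π ^ 3 * (m ^ 2 + n ^ 2 + p ^ 2) * (n ^ 2 + p ^ 2)) *
        (-m * p * cos (m * x) * cos (n * y) * sin (p * z))) ^ 2 =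
    8 * ((n ^ 2 + p ^ 2) ^ 2 * (sin (m * x) ^ 2 * cos (n * y) ^ 2 * cos (p * z) ^ 2) +
        m ^ 2 * n ^ 2 * ((1 - sin (m * x) ^ 2) * (1 - cos (n * y) ^ 2) * cos (p * z) ^ 2) +
        m ^ 2 * p ^ 2 * ((1 - sin (m * x) ^ 2) * cos (n * y) ^ 2 * (1 - cos (p * z) ^ 2))) /
      (π ^ 3 * (n ^ 2 + p ^ 2) * (m ^ 2 + n ^ 2 + p ^ 2)) := by
  have hC : (2 * √2 / √(π ^ 3 * (m ^ 2 + n ^ 2 + p ^ 2) * (n ^ 2 + p ^ 2))) ^ 2 =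
      8 / (π ^ 3 * (n ^ 2 + p ^ 2) * (m ^ 2 + n ^ 2 + p ^ 2)) := by
    rw [div_pow, mul_pow, sq_sqrt (by norm_num), sq_sqrt (by positivity)]
    congr 1 <;> ring
  generalize 2 * √2 / √(π ^ 3 * (m ^ 2 + n ^ 2 + p ^ 2) * (n ^ 2 + p ^ 2)) = K at hC ⊢
  rw [mul_pow K, mul_pow K, mul_pow K, hC, ← cos_sq', ← sin_sq, ← sin_sq]
  ring

lemma weighted_le_max (A B C s b c : ℝ) (hA : 0 ≤ A) (hs0 : 0 ≤ s) (hs1 : s ≤ 1)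
    (hb0 : 0 ≤ b) (hb1 : b ≤ 1) (hc0 : 0 ≤ c) (hc1 : c ≤ 1) :
    A * (s * b * c) + B * ((1 - s) * (1 - b) * c) + C * ((1 - s) * b * (1 - c)) ≤
      max A (max B C) := by
  set M := max A (max B C) with hM
  have hAM : A ≤ M := le_max_left _ _
  have hBM : B ≤ M := (le_max_left _ _).trans (le_max_right _ _)
  have hCM : C ≤ M := (le_max_right _ _).trans (le_max_right _ _)
  have hs : 0 ≤ 1 - s := by linarith
  have hb : 0 ≤ 1 - b := by linarith
  have hc : 0 ≤ 1 - c := by linarith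
  -- the weights missing from the partition of unity `(s + (1 - s)) (b + (1 - b)) (c + (1 - c)) = 1`
  have hmissing : 0 ≤ s * b * (1 - c) + s * (1 - b) + (1 - s) * b * c +
      (1 - s) * (1 - b) * (1 - c) := by
    positivity
  calc _ ≤ M * (s * b * c) + M * ((1 - s) * (1 - b) * c) + M * ((1 - s) * b * (1 - c)) := by
        gcongr
    _ = M * (1 - (s * b * (1 - c) + s * (1 - b) + (1 - s) * b * c +
          (1 - s) * (1 - b) * (1 - c))) := by ring
    _ ≤ M := mul_le_of_le_one_right (hA.trans hAM) (by linarith)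

lemma quarter_period_mem (k : ℕ) (hk : 0 < k) : π / (2 * k) ∈ Icc (0 : ℝ) π := by
  have hk1 : (1 : ℝ) ≤ k := by exact_mod_cast hk
  exact ⟨by positivity, div_le_self pi_pos.le (by linarith)⟩

/-- the squared L^∞ norm of the Stokes eigenfunction `W_{m,n,p}` over the
cube `[0,π]³` equals `8·max{(n²+p²)², m²n², m²p²}/(π³(n²+p²)(m²+n²+p²))`. -/
theorem stmt4 (m n p : ℕ) (hm : 0 < m) (hn : 0 < n) (hp : 0 < p) :
    IsGreatest
      ((fun ξ : ℝ × ℝ × ℝ =>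
          (2 * Real.sqrt 2 /
              Real.sqrt (π ^ 3 * ((m : ℝ) ^ 2 + (n : ℝ) ^ 2 + (p : ℝ) ^ 2) * ((n : ℝ) ^ 2 + (p : ℝ) ^ 2)) *
            (((n : ℝ) ^ 2 + (p : ℝ) ^ 2) * Real.sin (m * ξ.1) * Real.cos (n * ξ.2.1) *
              Real.cos (p * ξ.2.2))) ^ 2 +
          (2 * Real.sqrt 2 /
              Real.sqrt (π ^ 3 * ((m : ℝ) ^ 2 + (n : ℝ) ^ 2 + (p : ℝ) ^ 2) * ((n : ℝ) ^ 2 + (p : ℝ) ^ 2)) *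
            (-(m : ℝ) * (n : ℝ) * Real.cos (m * ξ.1) * Real.sin (n * ξ.2.1) *
              Real.cos (p * ξ.2.2))) ^ 2 +
          (2 * Real.sqrt 2 /
              Real.sqrt (π ^ 3 * ((m : ℝ) ^ 2 + (n : ℝ) ^ 2 + (p : ℝ) ^ 2) * ((n : ℝ) ^ 2 + (p : ℝ) ^ 2)) *
            (-(m : ℝ) * (p : ℝ) * Real.cos (m * ξ.1) * Real.cos (n * ξ.2.1) *
              Real.sin (p * ξ.2.2))) ^ 2) ''
        (Icc 0 π ×ˢ Icc 0 π ×ˢ Icc 0 π))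
      (8 * max (((n : ℝ) ^ 2 + (p : ℝ) ^ 2) ^ 2) (max ((m : ℝ) ^ 2 * (n : ℝ) ^ 2) ((m : ℝ) ^ 2 * (p : ℝ) ^ 2)) /
        (π ^ 3 * ((n : ℝ) ^ 2 + (p : ℝ) ^ 2) * ((m : ℝ) ^ 2 + (n : ℝ) ^ 2 + (p : ℝ) ^ 2))) := by
  have hm' : (0 : ℝ) < m := by exact_mod_cast hm
  have hn' : (0 : ℝ) < n := by exact_mod_cast hn
  have hp' : (0 : ℝ) < p := by exact_mod_cast hp
  have h0 : (0 : ℝ) ∈ Icc (0 : ℝ) π := ⟨le_rfl, pi_pos.le⟩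
  have quarter (k : ℝ) (hk : 0 < k) : k * (π / (2 * k)) = π / 2 := by field_simp
  constructor
  · rcases max_choice (((n : ℝ) ^ 2 + (p : ℝ) ^ 2) ^ 2)
      (max ((m : ℝ) ^ 2 * (n : ℝ) ^ 2) ((m : ℝ) ^ 2 * (p : ℝ) ^ 2)) with h | h
    · refine ⟨(π / (2 * m), 0, 0), ⟨quarter_period_mem m hm, h0, h0⟩, ?_⟩
      refine (sq_norm_eq _ _ _ _ _ _ hm' hn' hp').trans ?_
      simp only [h, quarter _ hm']
      simp
    · rw [h]
      rcases max_choice ((m : ℝ) ^ 2 * (n : ℝ) ^ 2) ((m : ℝ) ^ 2 * (p : ℝ) ^ 2) with h | h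
      · refine ⟨(0, π / (2 * n), 0), ⟨h0, quarter_period_mem n hn, h0⟩, ?_⟩
        refine (sq_norm_eq _ _ _ _ _ _ hm' hn' hp').trans ?_
        simp only [h, quarter _ hn']
        simp
      · refine ⟨(0, 0, π / (2 * p)), ⟨h0, h0, quarter_period_mem p hp⟩, ?_⟩
        refine (sq_norm_eq _ _ _ _ _ _ hm' hn' hp').trans ?_
        simp only [h, quarter _ hp']
        simp
  · rintro _ ⟨⟨x, y, z⟩, -, rfl⟩
    refine (sq_norm_eq _ _ _ _ _ _ hm' hn' hp').trans_le ?_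
    gcongr
    exact weighted_le_max _ _ _ _ _ _ (sq_nonneg _) (sq_nonneg _) (sin_sq_le_one _)
      (sq_nonneg _) (cos_sq_le_one _) (sq_nonneg _) (cos_sq_le_one _)
end

section
/- Let n, p be positive integers and let b, c be real numbers with b² + c² ≤ 1. Then the maximum over (y,z) ∈ [0,π]² of [b·p·sin(ny)·cos(pz) − c·n·cos(ny)·sin(pz)]² equals max{b²p², c²n²}. -/
/-! With `A = b p`, `B = c n`, Cauchy–Schwarz for the vectors `(sin ny, cos ny)` and
`(A cos pz, -B sin pz)` bounds the square by `A² cos² pz + B² sin² pz`, a convex combination of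
`A²` and `B²`. The value `A²` is attained at `(π / (2n), 0)` and `B²` at `(0, π / (2p))`. -/

open Real Set

lemma sq_sub_le_max (A B u v : ℝ) :
    (A * sin u * cos v - B * cos u * sin v) ^ 2 ≤ max (A ^ 2) (B ^ 2) := by
  have hu := sin_sq_add_cos_sq u
  have hv := sin_sq_add_cos_sq v
  calc (A * sin u * cos v - B * cos u * sin v) ^ 2
      ≤ (sin u ^ 2 + cos u ^ 2) * (A ^ 2 * cos v ^ 2 + B ^ 2 * sin v ^ 2) := by
        nlinarith [sq_nonneg (sin u * (B * sin v) + cos u * (A * cos v))]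
    _ = A ^ 2 * cos v ^ 2 + B ^ 2 * sin v ^ 2 := by rw [hu, one_mul]
    _ ≤ max (A ^ 2) (B ^ 2) * cos v ^ 2 + max (A ^ 2) (B ^ 2) * sin v ^ 2 := by
        gcongr
        · exact le_max_left _ _
        · exact le_max_right _ _
    _ = max (A ^ 2) (B ^ 2) := by rw [← mul_add, add_comm, hv, mul_one]

lemma pi_div_two_mul_mem {k : ℕ} (hk : 0 < k) : π / (2 * k) ∈ Icc 0 π := by
  have h1 : (1 : ℝ) ≤ k := by exact_mod_cast hk
  refine ⟨by positivity, div_le_self pi_pos.le (by linarith)⟩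

lemma mul_pi_div_two_mul {k : ℕ} (hk : 0 < k) : (k : ℝ) * (π / (2 * k)) = π / 2 := by
  have h1 : (k : ℝ) ≠ 0 := by exact_mod_cast hk.ne'
  field_simp

/-- for positive integers `n, p` and reals `b, c` with `b² + c² ≤ 1`, the
maximum over `(y,z) ∈ [0,π]²` of `[b·p·sin(ny)·cos(pz) − c·n·cos(ny)·sin(pz)]²` equals
`max{b²p², c²n²}`. -/
theorem stmt5 (n p : ℕ) (hn : 0 < n) (hp : 0 < p) (b c : ℝ) (hbc : b ^ 2 + c ^ 2 ≤ 1) :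
    IsGreatest
      ((fun q : ℝ × ℝ =>
          (b * (p : ℝ) * Real.sin (n * q.1) * Real.cos (p * q.2) -
           c * (n : ℝ) * Real.cos (n * q.1) * Real.sin (p * q.2)) ^ 2) ''
        (Icc 0 π ×ˢ Icc 0 π))
      (max (b ^ 2 * (p : ℝ) ^ 2) (c ^ 2 * (n : ℝ) ^ 2)) := by
  have h0 : (0 : ℝ) ∈ Icc 0 π := ⟨le_rfl, pi_pos.le⟩
  constructor
  · rcases max_choice (b ^ 2 * (p : ℝ) ^ 2) (c ^ 2 * (n : ℝ) ^ 2) with h | h <;> rw [h]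
    · refine ⟨(π / (2 * n), 0), ⟨pi_div_two_mul_mem hn, h0⟩, ?_⟩
      simp [mul_pi_div_two_mul hn, mul_pow]
    · refine ⟨(0, π / (2 * p)), ⟨h0, pi_div_two_mul_mem hp⟩, ?_⟩
      simp [mul_pi_div_two_mul hp, mul_pow]
  · rintro _ ⟨q, -, rfl⟩
    rw [← mul_pow, ← mul_pow]
    exact sq_sub_le_max _ _ _ _
end

section
/- Let m, p be positive integers and let a, c be real numbers with a² + c² ≤ 1. Then the maximum over (x,z) ∈ [0,π]² of [−a·p·sin(mx)·cos(pz) + c·m·cos(mx)·sin(pz)]² equals max{a²p², c²m²}. -/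
/-!
Write `A = a p`, `C = c m`. By Cauchy-Schwarz applied to `(-sin (m x), cos (m x))` and
`(A cos (p z), C sin (p z))`, the square is at most `A² cos² (p z) + C² sin² (p z)`, a convex
combination of `A²` and `C²`, hence at most their maximum. The value `A²` is attained at
`(π / (2 m), 0)` and `C²` at `(0, π / (2 p))`.
-/

open Real Set

/-- The upper bound, with sines and cosines replaced by points `(s, k)`, `(u, v)` of the unit circle. -/
lemma sq_comb_le_max (A C s k u v : ℝ) (h1 : s ^ 2 + k ^ 2 = 1) (h2 : u ^ 2 + v ^ 2 = 1) :
    (-(A * s * v) + C * k * u) ^ 2 ≤ max (A ^ 2) (C ^ 2) := by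
  have hcs : (-(A * s * v) + C * k * u) ^ 2 ≤ A ^ 2 * v ^ 2 + C ^ 2 * u ^ 2 := by
    -- Lagrange's identity: the defect is the square of the cross term.
    have : A ^ 2 * v ^ 2 + C ^ 2 * u ^ 2 - (-(A * s * v) + C * k * u) ^ 2
        = (A * v * k + C * u * s) ^ 2 := by
      linear_combination -(A ^ 2 * v ^ 2 + C ^ 2 * u ^ 2) * h1
    nlinarith [sq_nonneg (A * v * k + C * u * s)]
  calc _ ≤ A ^ 2 * v ^ 2 + C ^ 2 * u ^ 2 := hcs
    _ ≤ max (A ^ 2) (C ^ 2) * v ^ 2 + max (A ^ 2) (C ^ 2) * u ^ 2 := by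
        gcongr
        · exact le_max_left _ _
        · exact le_max_right _ _
    _ = max (A ^ 2) (C ^ 2) := by linear_combination max (A ^ 2) (C ^ 2) * h2

lemma pi_div_two_div_mem (n : ℕ) (hn : 0 < n) : π / 2 / (n : ℝ) ∈ Icc 0 π := by
  have h1 : (1 : ℝ) ≤ n := by exact_mod_cast hn
  have hpi := Real.pi_pos
  refine ⟨by positivity, (div_le_self (by positivity) h1).trans (by linarith)⟩

/-- for positive integers `m, p` and reals `a, c` with `a² + c² ≤ 1`, the
maximum over `(x,z) ∈ [0,π]²` of `[−a·p·sin(mx)·cos(pz) + c·m·cos(mx)·sin(pz)]²` equals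
`max{a²p², c²m²}`. -/
theorem stmt6 (m p : ℕ) (hm : 0 < m) (hp : 0 < p) (a c : ℝ) (hac : a ^ 2 + c ^ 2 ≤ 1) :
    IsGreatest
      ((fun q : ℝ × ℝ =>
          (-(a * (p : ℝ) * Real.sin (m * q.1) * Real.cos (p * q.2)) +
           c * (m : ℝ) * Real.cos (m * q.1) * Real.sin (p * q.2)) ^ 2) ''
        (Icc 0 π ×ˢ Icc 0 π))
      (max (a ^ 2 * (p : ℝ) ^ 2) (c ^ 2 * (m : ℝ) ^ 2)) := by
  have hm' : (m : ℝ) ≠ 0 := by exact_mod_cast hm.ne'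
  have hp' : (p : ℝ) ≠ 0 := by exact_mod_cast hp.ne'
  have h0 : (0 : ℝ) ∈ Icc 0 π := ⟨le_rfl, Real.pi_pos.le⟩
  constructor
  · rcases max_choice (a ^ 2 * (p : ℝ) ^ 2) (c ^ 2 * (m : ℝ) ^ 2) with h | h <;> rw [h]
    · refine ⟨(π / 2 / m, 0), ⟨pi_div_two_div_mem m hm, h0⟩, ?_⟩
      simp [mul_div_cancel₀ _ hm', mul_pow]
    · refine ⟨(0, π / 2 / p), ⟨h0, pi_div_two_div_mem p hp⟩, ?_⟩
      simp [mul_div_cancel₀ _ hp', mul_pow]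
  · rintro _ ⟨q, -, rfl⟩
    rw [← mul_pow, ← mul_pow]
    exact sq_comb_le_max _ _ _ _ _ _ (Real.sin_sq_add_cos_sq _) (Real.sin_sq_add_cos_sq _)
end

section
/- Let k₀ := 1 + 4√2·π/3, k₁ := (2/3)·√2·π², k₂ := ((π+2)/4)·k₀, and define G(s) := (2(1−s²)·arctan(s) + 2s + k₁ − k₂ − π/2)/(1 + 2s²) for s ≥ 0, and Γ(a,b,c) := k₀·Υ(b,c) + Υ(a,c) + Υ(a,b) + k₁·a². Then the maximum of Γ(a,b,c) over the unit sphere {(a,b,c) ∈ ℝ³ : a² + b² + c² = 1} equals sup_{s ≥ 0} G(s) + π/2 + ((2+π)/4)·(1 + 4√2·π/3). -/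
/-!
As a function of `x = a²` and `y = b²`, `Υ(a,b)` is symmetric, homogeneous of degree one and
concave. By homogeneity it suffices to see this for `upsilonSlice t = Υ(1,√t)`, whose derivative
`π/2 - arctan √t + 1/(√t (1+t))` is decreasing (`concaveOn_slice`).

With `a` fixed and `b² + c² = 2m²`, concavity gives `Υ(a,b) + Υ(a,c) ≤ 2Υ(a,m)`, and together with
symmetry and homogeneity `Υ(b,c) ≤ Υ(m,m)`. Since `k₀ ≥ 0`, it follows that
`Γ(a,b,c) ≤ Γ(a,m,m)`. On the arc `b = c = m`, `Γ` equals `G(m/|a|)` up to the additive constant in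
the theorem, except at the end point `a = 0`, which corresponds to `s = +∞`. Elementary estimates
give `G(s) ≤ 0 ≤ G(1)` for `s ≥ 3`, so `G` attains its supremum on `[0,3]` and the end point does
not compete.
-/

open Real Set

/-- The function `Υ(b,c) = b²·arctan|c/b| + c²·arctan|b/c| + |bc|`. With Lean's convention
`x/0 = 0`, the value agrees with the paper's convention `arctan(+∞) = π/2`, since whenever a
denominator vanishes the corresponding term is multiplied by `0`. -/
noncomputable def Upsilon (b c : ℝ) : ℝ :=
  b ^ 2 * Real.arctan |c / b| + c ^ 2 * Real.arctan |b / c| + |b * c|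

/-- `k₀ = 1 + 4√2·π/3`. -/
noncomputable def k0 : ℝ := 1 + 4 * Real.sqrt 2 * π / 3

/-- `k₁ = (2/3)·√2·π²`. -/
noncomputable def k1 : ℝ := 2 / 3 * Real.sqrt 2 * π ^ 2

/-- `k₂ = ((π+2)/4)·k₀`. -/
noncomputable def k2 : ℝ := (π + 2) / 4 * k0

/-- `G(s) = (2(1−s²)·arctan s + 2s + k₁ − k₂ − π/2)/(1 + 2s²)`. -/
noncomputable def G (s : ℝ) : ℝ :=
  (2 * (1 - s ^ 2) * Real.arctan s + 2 * s + k1 - k2 - π / 2) / (1 + 2 * s ^ 2)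

/-- `Γ(a,b,c) = k₀·Υ(b,c) + Υ(a,c) + Υ(a,b) + k₁·a²`. -/
noncomputable def Gamma (a b c : ℝ) : ℝ :=
  k0 * Upsilon b c + Upsilon a c + Upsilon a b + k1 * a ^ 2

/-- `Υ(1, √t)`, the restriction to the line `x = 1` of `Υ` viewed as a function of the squares
`x`, `y` of its arguments. -/
noncomputable def upsilonSlice (t : ℝ) : ℝ :=
  (1 - t) * Real.arctan (Real.sqrt t) + π / 2 * t + Real.sqrt t

lemma Upsilon_eq_slice {a : ℝ} (ha : a ≠ 0) (b : ℝ) :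
    Upsilon a b = a ^ 2 * upsilonSlice (b ^ 2 / a ^ 2) := by
  have hs : Real.sqrt (b ^ 2 / a ^ 2) = |b / a| := by
    rw [← div_pow, Real.sqrt_sq_eq_abs]
  unfold Upsilon upsilonSlice
  rw [hs]
  have habs : |a * b| = a ^ 2 * |b / a| := by
    rw [show a * b = a ^ 2 * (b / a) by field_simp, abs_mul, abs_of_nonneg (sq_nonneg a)]
  rw [habs]
  by_cases hb : b = 0
  · subst hb; simp
  · have hpos : 0 < |b / a| := abs_pos.mpr (div_ne_zero hb ha)
    have hinv : |a / b| = |b / a|⁻¹ := by rw [← abs_inv, inv_div]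
    rw [hinv, Real.arctan_inv_of_pos hpos]
    field_simp
    ring

lemma hasDerivAt_slice {t : ℝ} (ht : 0 < t) :
    HasDerivAt upsilonSlice
      (π / 2 - Real.arctan (Real.sqrt t) + 1 / (Real.sqrt t * (1 + t))) t := by
  have hs : 0 < Real.sqrt t := Real.sqrt_pos.mpr ht
  have hsq : Real.sqrt t ^ 2 = t := Real.sq_sqrt ht.le
  have h1 := Real.hasDerivAt_sqrt ht.ne'
  have h2 := ((((hasDerivAt_id t).const_sub 1).mul h1.arctan).add
    ((hasDerivAt_id t).const_mul (π / 2))).add h1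
  refine h2.congr_deriv ?_
  simp only [id]
  rw [hsq]
  field_simp
  ring

lemma concaveOn_slice : ConcaveOn ℝ (Ici 0) upsilonSlice := by
  refine AntitoneOn.concaveOn_of_deriv (convex_Ici 0) ?_ ?_ ?_
  · unfold upsilonSlice
    fun_prop
  · rw [interior_Ici]
    exact fun t ht => (hasDerivAt_slice ht).differentiableAt.differentiableWithinAt
  · rw [interior_Ici]
    intro x hx y hy hxy
    have hx' : 0 < x := hx
    rw [(hasDerivAt_slice hx).deriv, (hasDerivAt_slice hy).deriv]
    have hsx : 0 < Real.sqrt x := Real.sqrt_pos.mpr hx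
    have hle : Real.sqrt x ≤ Real.sqrt y := Real.sqrt_le_sqrt hxy
    have h1 := Real.arctan_mono hle
    have h2 : 1 / (Real.sqrt y * (1 + y)) ≤ 1 / (Real.sqrt x * (1 + x)) := by
      gcongr
    linarith

lemma Upsilon_comm (a b : ℝ) : Upsilon a b = Upsilon b a := by
  unfold Upsilon
  rw [mul_comm a b]
  ring

lemma Upsilon_zero_left (b : ℝ) : Upsilon 0 b = 0 := by simp [Upsilon]

lemma Upsilon_self (m : ℝ) : Upsilon m m = m ^ 2 * (π / 2 + 1) := by
  by_cases h : m = 0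
  · subst h; simp [Upsilon]
  · rw [Upsilon_eq_slice h, div_self (pow_ne_zero 2 h)]
    simp [upsilonSlice]

/-- Midpoint concavity of `Υ` in the square of its second argument. -/
lemma Upsilon_add_le {a b c m : ℝ} (hm : b ^ 2 + c ^ 2 = 2 * m ^ 2) :
    Upsilon a b + Upsilon a c ≤ 2 * Upsilon a m := by
  by_cases ha : a = 0
  · subst ha; simp [Upsilon_zero_left]
  · rw [Upsilon_eq_slice ha, Upsilon_eq_slice ha, Upsilon_eq_slice ha]
    have hb : (0 : ℝ) ≤ b ^ 2 / a ^ 2 := by positivity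
    have hc : (0 : ℝ) ≤ c ^ 2 / a ^ 2 := by positivity
    have h := concaveOn_slice.2 (mem_Ici.mpr hb) (mem_Ici.mpr hc)
      (by norm_num : (0 : ℝ) ≤ 1 / 2) (by norm_num : (0 : ℝ) ≤ 1 / 2) (by norm_num)
    have he : (1 / 2 : ℝ) • (b ^ 2 / a ^ 2) + (1 / 2 : ℝ) • (c ^ 2 / a ^ 2) = m ^ 2 / a ^ 2 := by
      simp only [smul_eq_mul]
      field_simp
      linarith
    rw [he] at h
    simp only [smul_eq_mul] at h
    nlinarith [sq_nonneg a]

lemma Upsilon_le_self {b c m : ℝ} (hm : b ^ 2 + c ^ 2 = 2 * m ^ 2) :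
    Upsilon b c ≤ Upsilon m m := by
  by_cases hb : b = 0
  · subst hb
    rw [Upsilon_zero_left, Upsilon_self]
    positivity
  by_cases hc : c = 0
  · subst hc
    rw [Upsilon_comm, Upsilon_zero_left, Upsilon_self]
    positivity
  have hb2 : 0 < b ^ 2 := by positivity
  have hc2 : 0 < c ^ 2 := by positivity
  have h1 := Upsilon_eq_slice hb c
  have h2 := Upsilon_eq_slice hc b
  rw [Upsilon_comm] at h2
  -- `1` is the convex combination of `c²/b²` and `b²/c²` with weights proportional to `b²`, `c²`.
  have h := concaveOn_slice.2 (mem_Ici.mpr (by positivity : 0 ≤ c ^ 2 / b ^ 2))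
    (mem_Ici.mpr (by positivity : 0 ≤ b ^ 2 / c ^ 2))
    (by positivity : (0 : ℝ) ≤ b ^ 2 / (b ^ 2 + c ^ 2))
    (by positivity : (0 : ℝ) ≤ c ^ 2 / (b ^ 2 + c ^ 2)) (by field_simp)
  have he : (b ^ 2 / (b ^ 2 + c ^ 2)) • (c ^ 2 / b ^ 2) +
      (c ^ 2 / (b ^ 2 + c ^ 2)) • (b ^ 2 / c ^ 2) = 1 := by
    simp only [smul_eq_mul]
    field_simp
    ring
  have h3 : upsilonSlice 1 = π / 2 + 1 := by simp [upsilonSlice]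
  rw [he, h3] at h
  have h4 : (b ^ 2 / (b ^ 2 + c ^ 2)) • upsilonSlice (c ^ 2 / b ^ 2) +
      (c ^ 2 / (b ^ 2 + c ^ 2)) • upsilonSlice (b ^ 2 / c ^ 2) =
      (2 * Upsilon b c) / (b ^ 2 + c ^ 2) := by
    rw [two_mul]
    nth_rewrite 1 [h1]
    rw [h2]
    simp only [smul_eq_mul]
    ring
  rw [h4, div_le_iff₀ (by positivity), hm] at h
  rw [Upsilon_self]
  linarith

lemma k0_nonneg : 0 ≤ k0 := by unfold k0; positivity

lemma Gamma_le_diag {a b c m : ℝ} (hm : b ^ 2 + c ^ 2 = 2 * m ^ 2) :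
    Gamma a b c ≤ Gamma a m m := by
  have h1 := mul_le_mul_of_nonneg_left (Upsilon_le_self hm) k0_nonneg
  have h2 := Upsilon_add_le (a := a) hm
  unfold _root_.Gamma
  linarith

lemma Gamma_diag {a m : ℝ} (ha : a ≠ 0) (hm : 0 ≤ m) (h : a ^ 2 + 2 * m ^ 2 = 1) :
    Gamma a m m = G (m / |a|) + π / 2 + k2 := by
  have hsq : m ^ 2 / a ^ 2 = (m / |a|) ^ 2 := by rw [div_pow, sq_abs]
  have hs0 : 0 ≤ m / |a| := by positivity
  unfold _root_.Gamma
  rw [Upsilon_self, Upsilon_eq_slice ha, hsq]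
  have hm2 : m ^ 2 = a ^ 2 * (m / |a|) ^ 2 := by
    rw [← hsq]; field_simp
  generalize m / |a| = s at *
  have ha2 : a ^ 2 = 1 / (1 + 2 * s ^ 2) := by
    rw [eq_div_iff (by positivity)]
    rw [hm2] at h
    linarith
  rw [hm2, ha2]
  unfold upsilonSlice G k2
  rw [Real.sqrt_sq hs0]
  field_simp
  ring

lemma continuous_G : Continuous G := by
  unfold G
  refine Continuous.div (by fun_prop) (by fun_prop) (fun s => by positivity)

lemma numerator_const_bounds : -2 ≤ k1 - k2 - π / 2 ∧ k1 - k2 - π / 2 ≤ 0 := by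
  have e : k1 - k2 - π / 2 = Real.sqrt 2 * (π * (π - 2)) / 3 - 3 * π / 4 - 1 / 2 := by
    unfold k1 k2 k0; ring
  have hp1 := Real.pi_gt_d2
  have hp2 := Real.pi_lt_d2
  have hs1 : 1 ≤ Real.sqrt 2 := Real.one_le_sqrt.mpr (by norm_num)
  have hs2 : Real.sqrt 2 ≤ 3 / 2 := Real.sqrt_le_iff.mpr ⟨by norm_num, by norm_num⟩
  have hq1 : 3 ≤ π * (π - 2) := by nlinarith
  have hq2 : π * (π - 2) ≤ 4 := by nlinarith
  rw [e]
  constructor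
  · nlinarith
  · nlinarith

lemma G_one_nonneg : 0 ≤ G 1 := by
  unfold G
  apply div_nonneg _ (by norm_num)
  have := numerator_const_bounds.1
  norm_num
  linarith

lemma G_nonpos_of_three_le {s : ℝ} (hs : 3 ≤ s) : G s ≤ 0 := by
  unfold G
  apply div_nonpos_of_nonpos_of_nonneg _ (by positivity)
  have h1 := numerator_const_bounds.2
  have h2 : π / 4 ≤ Real.arctan s := by
    rw [← Real.arctan_one]; exact Real.arctan_mono (by linarith)
  have hp1 := Real.pi_gt_three
  have h3 : 0 ≤ (s ^ 2 - 1) * (Real.arctan s - 3 / 4) :=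
    mul_nonneg (by nlinarith) (by linarith)
  nlinarith

/-- `G` attains its supremum over `[0, ∞)`. -/
lemma exists_max_G : ∃ s, 0 ≤ s ∧ ∀ t, 0 ≤ t → G t ≤ G s := by
  obtain ⟨s, hs, hmax⟩ := (isCompact_Icc (a := (0 : ℝ)) (b := 3)).exists_isMaxOn
    ⟨0, by norm_num⟩ continuous_G.continuousOn
  refine ⟨s, hs.1, fun t ht => ?_⟩
  rcases le_total t 3 with h | h
  · exact hmax ⟨ht, h⟩
  · exact (G_nonpos_of_three_le h).trans
      (G_one_nonneg.trans (hmax (show (1 : ℝ) ∈ Icc 0 3 by constructor <;> norm_num)))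


/-- the maximum of `Γ` over the unit sphere equals
`sup_{s ≥ 0} G(s) + π/2 + ((2+π)/4)·(1 + 4√2·π/3)`. -/
theorem stmt18 :
    IsGreatest
      {v : ℝ | ∃ a b c : ℝ, a ^ 2 + b ^ 2 + c ^ 2 = 1 ∧ v = Gamma a b c}
      (sSup (G '' Ici 0) + π / 2 + (2 + π) / 4 * (1 + 4 * Real.sqrt 2 * π / 3)) := by
  obtain ⟨s, hs, hmax⟩ := exists_max_G
  have hsup : sSup (G '' Ici 0) = G s :=
    IsGreatest.csSup_eq ⟨⟨s, hs, rfl⟩, by rintro _ ⟨t, ht, rfl⟩; exact hmax t ht⟩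
  have hk : (2 + π) / 4 * (1 + 4 * Real.sqrt 2 * π / 3) = k2 := by
    unfold k2 k0; ring
  rw [hsup, hk]
  constructor
  · have hpos : 0 < Real.sqrt (1 + 2 * s ^ 2) := Real.sqrt_pos.mpr (by positivity)
    have hsq : Real.sqrt (1 + 2 * s ^ 2) ^ 2 = 1 + 2 * s ^ 2 := Real.sq_sqrt (by positivity)
    generalize Real.sqrt (1 + 2 * s ^ 2) = q at *
    have h : (1 / q) ^ 2 + 2 * (s / q) ^ 2 = 1 := by
      field_simp
      linarith
    refine ⟨1 / q, s / q, s / q, by linarith, ?_⟩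
    rw [Gamma_diag (by positivity) (by positivity) h, abs_of_pos (by positivity)]
    congr 3
    field_simp
  · rintro _ ⟨a, b, c, h, rfl⟩
    have hm : Real.sqrt ((b ^ 2 + c ^ 2) / 2) ^ 2 = (b ^ 2 + c ^ 2) / 2 :=
      Real.sq_sqrt (by positivity)
    have hm0 := Real.sqrt_nonneg ((b ^ 2 + c ^ 2) / 2)
    generalize Real.sqrt ((b ^ 2 + c ^ 2) / 2) = m at *
    refine (Gamma_le_diag (m := m) (by linarith)).trans ?_
    by_cases ha : a = 0
    · subst ha
      have hm2 : m ^ 2 = 1 / 2 := by linarith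
      have hG := G_one_nonneg.trans (hmax 1 zero_le_one)
      have hp := Real.pi_pos
      have hd : Gamma 0 m m = k2 := by
        unfold _root_.Gamma k2
        rw [Upsilon_self, Upsilon_zero_left, hm2]
        ring
      rw [hd]
      linarith
    · rw [Gamma_diag ha hm0 (by linarith)]
      have := hmax (m / |a|) (by positivity)
      linarith
end

section
/- Let k₀ := 1 + 4√2·π/3, k₁ := (2/3)·√2·π², and define Γ(a,b,c) := k₀·Υ(b,c) + Υ(a,c) + Υ(a,b) + k₁·a². Then the maximum of Γ(a,b,c) over the unit sphere {(a,b,c) ∈ ℝ³ : a² + b² + c² = 1} lies strictly between 10.9 and 10.92. -/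
open Real Set

/-- The profile `t ↦ Υ(1, t)` for `t > 0`, with `arctan (1/t)` written as `π/2 - arctan t`. -/
noncomputable def prof (t : ℝ) : ℝ := arctan t + t ^ 2 * (π / 2 - arctan t) + t

/-- Partial derivative of `Υ(a, b)` with respect to `a²` on the ray `b = τ a`. -/
noncomputable def pc (τ : ℝ) : ℝ := arctan τ + τ ^ 3 / (1 + τ ^ 2)

/-- Partial derivative of `Υ(a, b)` with respect to `b²` on the ray `b = τ a`. -/
noncomputable def qc (τ : ℝ) : ℝ := π / 2 - arctan τ + 1 / (τ * (1 + τ ^ 2))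

lemma qc_anti {s t : ℝ} (hs : 0 < s) (hst : s ≤ t) : qc t ≤ qc s := by
  have h1 : arctan s ≤ arctan t := arctan_le_arctan_iff.2 hst
  have h2 : 1 / (t * (1 + t ^ 2)) ≤ 1 / (s * (1 + s ^ 2)) := by
    have : 0 < t := hs.trans_le hst
    gcongr
  unfold qc
  linarith

lemma hasDerivAt_prof {t : ℝ} (ht : 0 < t) : HasDerivAt prof (2 * t * qc t) t := by
  have h := ((hasDerivAt_arctan t).add
    (((hasDerivAt_id t).pow 2).mul ((hasDerivAt_arctan t).const_sub (π / 2)))).add (hasDerivAt_id t)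
  refine h.congr_deriv ?_
  have : (1 + t ^ 2) ≠ 0 := by positivity
  simp only [qc, id, Pi.pow_apply]
  field_simp
  push_cast
  ring

lemma prof_tangent {τ : ℝ} (h : 0 < τ) : prof τ = pc τ + qc τ * τ ^ 2 := by
  unfold prof pc qc
  have : (1 + τ ^ 2) ≠ 0 := by positivity
  field_simp
  ring

lemma prof_le {τ t : ℝ} (hτ : 0 < τ) (ht : 0 < t) : prof t ≤ pc τ + qc τ * t ^ 2 := by
  have hd : ∀ x : ℝ, 0 < x →
      HasDerivAt (fun x => qc τ * x ^ 2 - prof x) (2 * x * (qc τ - qc x)) x := by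
    intro x hx
    refine ((((hasDerivAt_id x).pow 2).const_mul (qc τ)).sub (hasDerivAt_prof hx)).congr_deriv ?_
    simp only [id]
    push_cast
    ring
  have e := prof_tangent hτ
  rcases lt_trichotomy t τ with hlt | rfl | hlt
  · obtain ⟨x, hx, hs⟩ := exists_hasDerivAt_eq_slope _ _ hlt
      (fun x hx => (hd x (ht.trans_le hx.1)).continuousAt.continuousWithinAt)
      (fun x hx => hd x (ht.trans hx.1))
    have hx0 : 0 < x := ht.trans hx.1
    have hq := qc_anti hx0 hx.2.le
    rw [eq_div_iff (by linarith)] at hs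
    have : 0 ≤ x * (qc x - qc τ) * (τ - t) :=
      mul_nonneg (mul_nonneg hx0.le (by linarith)) (by linarith)
    nlinarith
  · exact e.le
  · obtain ⟨x, hx, hs⟩ := exists_hasDerivAt_eq_slope _ _ hlt
      (fun x hx => (hd x (hτ.trans_le hx.1)).continuousAt.continuousWithinAt)
      (fun x hx => hd x (hτ.trans hx.1))
    have hx0 : 0 < x := hτ.trans hx.1
    have hq := qc_anti hτ hx.1.le
    rw [eq_div_iff (by linarith)] at hs
    have : 0 ≤ x * (qc τ - qc x) * (t - τ) :=
      mul_nonneg (mul_nonneg hx0.le (by linarith)) (by linarith)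
    nlinarith

lemma Upsilon_eq {a b : ℝ} (ha : a ≠ 0) (hb : b ≠ 0) :
    Upsilon a b = a ^ 2 * prof |b / a| := by
  have hp : 0 < |b / a| := abs_pos.2 (div_ne_zero hb ha)
  have h1 : arctan |a / b| = π / 2 - arctan |b / a| := by
    rw [← arctan_inv_of_pos hp, ← abs_inv, inv_div]
  have h2 : a ^ 2 * |b / a| ^ 2 = b ^ 2 := by
    rw [sq_abs]
    field_simp
  have h3 : a ^ 2 * |b / a| = |a * b| := by
    rw [← abs_of_nonneg (sq_nonneg a), ← abs_mul]
    congr 1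
    field_simp
  unfold Upsilon prof
  rw [h1, ← h3, ← h2]
  ring

lemma pc_nonneg {τ : ℝ} (h : 0 < τ) : 0 ≤ pc τ := by
  have := arctan_pos.2 h
  unfold pc
  positivity

lemma qc_nonneg {τ : ℝ} (h : 0 < τ) : 0 ≤ qc τ := by
  have := arctan_lt_pi_div_two τ
  have : 0 ≤ 1 / (τ * (1 + τ ^ 2)) := by positivity
  unfold qc
  linarith

lemma Upsilon_le {τ : ℝ} (h : 0 < τ) (a b : ℝ) :
    Upsilon a b ≤ pc τ * a ^ 2 + qc τ * b ^ 2 := by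
  have hp := pc_nonneg h
  have hq := qc_nonneg h
  have hr : 0 ≤ pc τ * a ^ 2 + qc τ * b ^ 2 := by positivity
  by_cases ha : a = 0
  · subst ha
    simpa [Upsilon] using hr
  by_cases hb : b = 0
  · subst hb
    simpa [Upsilon] using hr
  rw [Upsilon_eq ha hb]
  have h1 := prof_le h (abs_pos.2 (div_ne_zero hb ha))
  have h2 : a ^ 2 * |b / a| ^ 2 = b ^ 2 := by
    rw [sq_abs]
    field_simp
  have h3 := mul_le_mul_of_nonneg_left h1 (sq_nonneg a)
  calc _ ≤ _ := h3
    _ = pc τ * a ^ 2 + qc τ * (a ^ 2 * |b / a| ^ 2) := by ring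
    _ = _ := by rw [h2]

lemma Upsilon_tangent {τ a : ℝ} (h : 0 < τ) (ha : 0 < a) :
    Upsilon a (τ * a) = pc τ * a ^ 2 + qc τ * (τ * a) ^ 2 := by
  rw [Upsilon_eq ha.ne' (mul_pos h ha).ne', mul_div_assoc, div_self ha.ne', mul_one,
    abs_of_pos h, prof_tangent h]
  ring

lemma continuous_sq_mul_arctan :
    Continuous (fun v : ℝ × ℝ => v.1 ^ 2 * arctan |v.2 / v.1|) := by
  rw [continuous_iff_continuousAt]
  rintro ⟨x, y⟩
  by_cases hx : x = 0
  · subst hx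
    -- The quotient is singular here, but `arctan` is bounded and the prefactor vanishes.
    have hb : Filter.Tendsto (fun v : ℝ × ℝ => v.1 ^ 2 * (π / 2)) (nhds ((0 : ℝ), y)) (nhds 0) := by
      have : Continuous (fun v : ℝ × ℝ => v.1 ^ 2 * (π / 2)) := by fun_prop
      simpa using this.tendsto ((0 : ℝ), y)
    have hs := squeeze_zero (f := fun v : ℝ × ℝ => v.1 ^ 2 * arctan |v.2 / v.1|)
      (fun v => mul_nonneg (sq_nonneg _) (arctan_nonneg.2 (abs_nonneg _)))
      (fun v => mul_le_mul_of_nonneg_left (arctan_lt_pi_div_two _).le (sq_nonneg _)) hb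
    simpa [ContinuousAt] using hs
  · have hd : ContinuousAt (fun v : ℝ × ℝ => v.2 / v.1) (x, y) :=
      continuousAt_snd.div continuousAt_fst hx
    exact (continuousAt_fst.pow 2).mul (continuous_arctan.continuousAt.comp hd.abs)

lemma continuous_Upsilon : Continuous (fun v : ℝ × ℝ => Upsilon v.1 v.2) := by
  unfold Upsilon
  exact (continuous_sq_mul_arctan.add (continuous_sq_mul_arctan.comp continuous_swap)).add
    (by fun_prop)

lemma continuous_Gamma : Continuous (fun v : ℝ × ℝ × ℝ => Gamma v.1 v.2.1 v.2.2) := by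
  have h1 := continuous_Upsilon.comp (f := fun v : ℝ × ℝ × ℝ => (v.2.1, v.2.2)) (by fun_prop)
  have h2 := continuous_Upsilon.comp (f := fun v : ℝ × ℝ × ℝ => (v.1, v.2.2)) (by fun_prop)
  have h3 := continuous_Upsilon.comp (f := fun v : ℝ × ℝ × ℝ => (v.1, v.2.1)) (by fun_prop)
  unfold _root_.Gamma
  exact (((continuous_const.mul h1).add h2).add h3).add (by fun_prop)

lemma isCompact_unitSphere : IsCompact {v : ℝ × ℝ × ℝ | v.1 ^ 2 + v.2.1 ^ 2 + v.2.2 ^ 2 = 1} := by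
  refine IsCompact.of_isClosed_subset
    (isCompact_Icc (a := ((-1 : ℝ), (-1 : ℝ), (-1 : ℝ))) (b := ((1 : ℝ), (1 : ℝ), (1 : ℝ))))
    (isClosed_eq (by fun_prop) continuous_const) ?_
  rintro ⟨a, b, c⟩ h
  simp only [mem_ofPred_eq] at h
  simp only [mem_Icc, Prod.mk_le_mk]
  refine ⟨⟨?_, ?_, ?_⟩, ?_, ?_, ?_⟩ <;>
    nlinarith [sq_nonneg a, sq_nonneg b, sq_nonneg c]

lemma arctan_bounds {x : ℝ} (hx : 0 < x) : x - x ^ 3 / 3 ≤ arctan x ∧ arctan x ≤ x := by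
  constructor
  · obtain ⟨y, hy, hs⟩ := exists_hasDerivAt_eq_slope (fun x => arctan x - (x - x ^ 3 / 3))
      (fun y => 1 / (1 + y ^ 2) - (1 - y ^ 2)) hx (by fun_prop) (fun y _ => by
        refine ((hasDerivAt_arctan y).sub
          ((hasDerivAt_id y).sub (((hasDerivAt_id y).pow 3).div_const 3))).congr_deriv ?_
        simp only [id]
        push_cast
        ring)
    have h0 : 0 ≤ 1 / (1 + y ^ 2) - (1 - y ^ 2) := by
      have : 1 / (1 + y ^ 2) - (1 - y ^ 2) = y ^ 4 / (1 + y ^ 2) := by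
        field_simp
        ring
      rw [this]
      positivity
    rw [hs, sub_zero] at h0
    have := (le_div_iff₀ hx).1 h0
    simp only [arctan_zero] at this
    linarith
  · obtain ⟨y, hy, hs⟩ := exists_hasDerivAt_eq_slope arctan
      (fun y => 1 / (1 + y ^ 2)) hx (by fun_prop) (fun y _ => hasDerivAt_arctan y)
    have h0 : 1 / (1 + y ^ 2) ≤ 1 := by
      rw [div_le_one (by positivity)]
      nlinarith [sq_nonneg y]
    rw [hs, arctan_zero, sub_zero, sub_zero, div_le_one hx] at h0
    exact h0

lemma arctan_slope : arctan (25 / 37) = π / 4 - arctan (6 / 31) := by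
  have h := arctan_add (x := 25 / 37) (y := 6 / 31) (by norm_num)
  norm_num at h
  linarith

lemma Gamma_le (a b c : ℝ) : Gamma a b c ≤
    (k1 + 2 * pc (25 / 37)) * a ^ 2
      + (k0 * (π / 4 + 1 / 2) + qc (25 / 37)) * (b ^ 2 + c ^ 2) := by
  have hk : 0 ≤ k0 := by
    unfold k0
    positivity
  have h1 := mul_le_mul_of_nonneg_left (Upsilon_le one_pos b c) hk
  have h2 := Upsilon_le (show (0 : ℝ) < 25 / 37 by norm_num) a c
  have h3 := Upsilon_le (show (0 : ℝ) < 25 / 37 by norm_num) a b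
  have hp : pc 1 = π / 4 + 1 / 2 := by
    rw [pc, arctan_one]
    norm_num
  have hq : qc 1 = π / 4 + 1 / 2 := by
    rw [qc, arctan_one]
    ring
  rw [hp, hq] at h1
  unfold _root_.Gamma
  linarith

lemma Gamma_ray {a : ℝ} (ha : 0 < a) : Gamma a (25 / 37 * a) (25 / 37 * a) =
    ((k1 + 2 * pc (25 / 37))
      + (k0 * (π / 4 + 1 / 2) + qc (25 / 37)) * (1250 / 1369)) * a ^ 2 := by
  have hb : 0 < 25 / 37 * a := by positivity
  have h1 := Upsilon_tangent one_pos hb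
  have h2 := Upsilon_tangent (show (0 : ℝ) < 25 / 37 by norm_num) ha
  have hp : pc 1 = π / 4 + 1 / 2 := by
    rw [pc, arctan_one]
    norm_num
  have hq : qc 1 = π / 4 + 1 / 2 := by
    rw [qc, arctan_one]
    ring
  rw [one_mul, hp, hq] at h1
  unfold _root_.Gamma
  rw [h1, h2]
  ring

lemma sqrt_two_bounds : 1.41421 < √2 ∧ √2 < 1.41422 :=
  ⟨(lt_sqrt (by norm_num)).2 (by norm_num), (sqrt_lt' (by norm_num)).2 (by norm_num)⟩

lemma pi_sq_bounds : 9.8695 < π ^ 2 ∧ π ^ 2 < 9.8697 := by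
  constructor <;> nlinarith [pi_gt_d6, pi_lt_d6]

lemma k1_bounds : 9.305 < k1 ∧ k1 < 9.3054 := by
  obtain ⟨s1, s2⟩ := sqrt_two_bounds
  obtain ⟨p1, p2⟩ := pi_sq_bounds
  unfold k1
  constructor <;> nlinarith

lemma k0_mul_bounds : 8.8997 < k0 * (π / 4 + 1 / 2) ∧ k0 * (π / 4 + 1 / 2) < 8.9001 := by
  obtain ⟨s1, s2⟩ := sqrt_two_bounds
  have p1 := pi_gt_d6
  have p2 := pi_lt_d6
  have l : 6.9238 < k0 ∧ k0 < 6.92391 := by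
    unfold k0
    constructor <;> nlinarith
  constructor <;> nlinarith

/-- the maximum of `Γ` over the unit sphere is attained and lies strictly
between `10.9` and `10.92` (so `≈ 10.91`). -/
theorem stmt19 :
    ∃ M : ℝ,
      IsGreatest {v : ℝ | ∃ a b c : ℝ, a ^ 2 + b ^ 2 + c ^ 2 = 1 ∧ v = Gamma a b c} M ∧
      10.9 < M ∧ M < 10.92 := by
  obtain ⟨x1, x2⟩ := arctan_bounds (show (0 : ℝ) < 6 / 31 by norm_num)
  have p1 := pi_gt_d6
  have p2 := pi_lt_d6
  obtain ⟨u1, u2⟩ := k1_bounds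
  obtain ⟨w1, w2⟩ := k0_mul_bounds
  have hA : k1 + 2 * pc (25 / 37) < 10.92 := by
    rw [pc, arctan_slope]
    norm_num at x1 ⊢
    linarith
  have hB : k0 * (π / 4 + 1 / 2) + qc (25 / 37) < 10.92 := by
    rw [qc, arctan_slope]
    norm_num at w2 ⊢
    linarith
  have hL : 10.9 * (1 + 1250 / 1369) < (k1 + 2 * pc (25 / 37))
      + (k0 * (π / 4 + 1 / 2) + qc (25 / 37)) * (1250 / 1369) := by
    rw [pc, qc, arctan_slope]
    norm_num at w1 u1 ⊢
    linarith
  obtain ⟨⟨a, b, c⟩, hv, hmax⟩ := isCompact_unitSphere.exists_isMaxOn ⟨(1, 0, 0), by simp⟩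
    continuous_Gamma.continuousOn
  simp only [mem_ofPred_eq] at hv
  refine ⟨Gamma a b c, ⟨⟨a, b, c, hv, rfl⟩, ?_⟩, ?_, ?_⟩
  · rintro _ ⟨x, y, z, h, rfl⟩
    exact hmax (show (x, y, z) ∈ {v : ℝ × ℝ × ℝ | v.1 ^ 2 + v.2.1 ^ 2 + v.2.2 ^ 2 = 1} from h)
  · -- The unit vector on the ray through `(37, 25, 25)`, whose squared length is `2619`.
    have ha : 0 < √(1369 / 2619) := sqrt_pos.2 (by norm_num)
    have hs : √(1369 / 2619) ^ 2 = (1369 / 2619 : ℝ) := sq_sqrt (by norm_num)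
    have h := hmax (show (√(1369 / 2619), 25 / 37 * √(1369 / 2619), 25 / 37 * √(1369 / 2619)) ∈
      {v : ℝ × ℝ × ℝ | v.1 ^ 2 + v.2.1 ^ 2 + v.2.2 ^ 2 = 1} by
        simp only [mem_ofPred_eq, mul_pow, hs]
        norm_num)
    simp only [mem_ofPred_eq] at h
    rw [Gamma_ray ha, hs] at h
    linarith
  · have h := Gamma_le a b c
    rcases (sq_nonneg a).eq_or_lt with h0 | h0
    · rw [← h0] at h hv
      have : b ^ 2 + c ^ 2 = 1 := by linarith
      rw [this] at h
      linarith
    · nlinarith [mul_lt_mul_of_pos_right hA h0,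
        mul_le_mul_of_nonneg_right hB.le (add_nonneg (sq_nonneg b) (sq_nonneg c))]
end
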